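/- For the flat torus of modulus τ with basis sections s_j(z) = θ_{j/k,0}(kz + φ, kτ), j = 1,…,k, the L^2 Gram matrix with weight h_0^k(z) = exp(πik(z-z̄)^2/(τ-τ̄) + 2πi(z-z̄)(φ-φ̄)/(τ-τ̄)) and flat metric of area 2π is diagonal: ⟨s_j, s_l⟩ = √(i/(k(τ-τ̄))) · exp(-(πi/k)(φ-φ̄)^2/(τ-τ̄)) · δ_{jl}. -/

import Mathlib

open Complex ComplexConjugate

/-- The theta function with characteristics:
`θ_{a,b}(z,τ) = ∑_{n∈ℤ} exp(πi(n+a)²τ + 2πi(n+a)(z+b))`. -/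
noncomputable def thetaChar (a b : ℝ) (z τ : ℂ) : ℂ :=
  ∑' n : ℤ, Complex.exp (Real.pi * I * ((n : ℂ) + a) ^ 2 * τ +
    2 * Real.pi * I * ((n : ℂ) + a) * (z + b))

/-!
On the line `z = x + y τ` with `y` fixed, `s_j` is a Fourier series in `x` whose frequencies lie in
`j + k ℤ`. Different residues modulo `k` give disjoint frequencies, hence orthogonality; for `j = l`
Parseval leaves the sum of the squared moduli of the coefficients. The weight `h_0^k` is a Gaussian
`W (y)`, and, completing the square, its product with the squared modulus of the coefficient of
frequency `k n + j` is `W (y + n + j / k)`. Summing over `n` and integrating over `0 ≤ y ≤ 1`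
therefore gives the integral of `W` over the whole line.
-/

open MeasureTheory AddCircle

section FourierSeries

variable {T : ℝ} [Fact (0 < T)]

lemma integral_conj_fourier_mul_fourier (m n : ℤ) :
    ∫ x : AddCircle T, conj (fourier m x) * fourier n x ∂haarAddCircle =
      if m = n then 1 else 0 := by
  have h := congrFun (fourierCoeff_fourier (T := T) n) m
  simpa only [fourierCoeff, fourier_neg, smul_eq_mul, Pi.single_apply] using h

variable {ι κ : Type*} [Countable ι] [Countable κ]

lemma integral_conj_tsum_fourier_mul_tsum_fourier {c : ι → ℂ} {d : κ → ℂ}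
    (hc : Summable fun m ↦ ‖c m‖) (hd : Summable fun n ↦ ‖d n‖) (P : ι → ℤ) (Q : κ → ℤ) :
    ∫ x : AddCircle T, conj (∑' m, c m * fourier (P m) x) * ∑' n, d n * fourier (Q n) x
        ∂haarAddCircle =
      ∑' p : ι × κ, if P p.1 = Q p.2 then conj (c p.1) * d p.2 else 0 := by
  have norm_fourier (N : ℤ) (x : AddCircle T) : ‖fourier N x‖ = 1 := Circle.norm_coe _
  have product_eq (x : AddCircle T) :
      conj (∑' m, c m * fourier (P m) x) * ∑' n, d n * fourier (Q n) x =
        ∑' p : ι × κ, conj (c p.1) * d p.2 * (conj (fourier (P p.1) x) * fourier (Q p.2) x) := by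
    rw [conj_tsum, tsum_mul_tsum_of_summable_norm
      (by simpa only [RCLike.norm_conj, norm_mul, norm_fourier, mul_one] using hc)
      (by simpa only [norm_mul, norm_fourier, mul_one] using hd)]
    simp only [map_mul, mul_mul_mul_comm]
  have summable_coeff : Summable fun p : ι × κ ↦ ‖conj (c p.1) * d p.2‖ :=
    Summable.mul_norm (f := fun m ↦ conj (c m)) (by simpa only [RCLike.norm_conj] using hc) hd
  simp only [product_eq]
  refine (integral_tsum_of_summable_integral_norm ?_ ?_).symm.trans ?_
  · exact fun p ↦ Continuous.integrable_of_hasCompactSupport (by fun_prop)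
      (HasCompactSupport.of_compactSpace _)
  · simpa only [norm_mul, RCLike.norm_conj, norm_fourier, mul_one, integral_const, probReal_univ,
      one_smul] using summable_coeff
  · simp only [integral_const_mul, integral_conj_fourier_mul_fourier, mul_ite, mul_one, mul_zero]

lemma integral_conj_tsum_fourier_mul_tsum_fourier_of_forall_ne {c : ι → ℂ} {d : κ → ℂ}
    (hc : Summable fun m ↦ ‖c m‖) (hd : Summable fun n ↦ ‖d n‖) {P : ι → ℤ} {Q : κ → ℤ}
    (hPQ : ∀ m n, P m ≠ Q n) :
    ∫ x : AddCircle T, conj (∑' m, c m * fourier (P m) x) * ∑' n, d n * fourier (Q n) x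
        ∂haarAddCircle = 0 := by
  simp only [integral_conj_tsum_fourier_mul_tsum_fourier hc hd, hPQ, if_false, tsum_zero]

lemma integral_conj_tsum_fourier_mul_self {c : ι → ℂ} (hc : Summable fun n ↦ ‖c n‖)
    {P : ι → ℤ} (hP : P.Injective) :
    ∫ x : AddCircle T, conj (∑' n, c n * fourier (P n) x) * ∑' n, c n * fourier (P n) x
        ∂haarAddCircle = ∑' n, (‖c n‖ : ℂ) ^ 2 := by
  have diagonal_injective : Function.Injective fun n : ι ↦ (n, n) := fun _ _ h ↦ congrArg Prod.fst h
  rw [integral_conj_tsum_fourier_mul_tsum_fourier hc hc, ← diagonal_injective.tsum_eq]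
  · simp only [if_true, conj_mul']
  · rintro ⟨m, n⟩ hmn
    have : P m = P n := by_contra fun h ↦ hmn (if_neg h)
    exact ⟨m, by rw [hP this]⟩

end FourierSeries

lemma intervalIntegral_eq_integral_haarAddCircle {E : Type*} [NormedAddCommGroup E]
    [NormedSpace ℝ E] (f : UnitAddCircle → E) :
    ∫ x in (0 : ℝ)..1, f x = ∫ x : UnitAddCircle, f x ∂haarAddCircle := by
  rw [integral_haarAddCircle, inv_one, one_smul, ← UnitAddCircle.intervalIntegral_preimage 0 f,
    zero_add]

lemma intervalIntegral_tsum_comp_add_int {E : Type*} [NormedAddCommGroup E] [NormedSpace ℝ E]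
    {f : ℝ → E} (hf : Integrable f) :
    ∫ y in (0 : ℝ)..1, ∑' n : ℤ, f (y + n) = ∫ u, f u := by
  rw [← hf.hasSum_intervalIntegral_comp_add_int.tsum_eq]
  simp only [intervalIntegral.integral_of_le zero_le_one]
  refine (integral_tsum_of_summable_integral_norm
    (fun n : ℤ ↦ (hf.comp_add_right (n : ℝ)).integrableOn) ?_).symm
  simpa only [intervalIntegral.integral_of_le zero_le_one] using
    hf.norm.hasSum_intervalIntegral_comp_add_int.summable

lemma intervalIntegral_swap_of_continuous {E : Type*} [NormedAddCommGroup E] [NormedSpace ℝ E]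
    {F : ℝ → ℝ → E} (hF : Continuous F.uncurry) (a b c d : ℝ) :
    ∫ x in a..b, ∫ y in c..d, F x y = ∫ y in c..d, ∫ x in a..b, F x y :=
  intervalIntegral_intervalIntegral_swap <|
    (hF.continuousOn.integrableOn_compact (isCompact_uIcc.prod isCompact_uIcc)).mono_set
      (Set.prod_mono Set.uIoc_subset_uIcc Set.uIoc_subset_uIcc)

lemma sub_conj_ne_zero {τ : ℂ} (hτ : τ.im ≠ 0) : τ - conj τ ≠ 0 := by
  simpa [sub_conj] using hτ

lemma fin_add_one_modEq_add_one_iff {k : ℕ} (j l : Fin k) :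
    ((j : ℕ) + 1 : ℤ) ≡ (l : ℕ) + 1 [ZMOD k] ↔ j = l := by
  rw [Int.modEq_iff_dvd, add_sub_add_right_eq_sub, ← Int.modEq_iff_dvd, Int.natCast_modEq_iff,
    Nat.ModEq, Nat.mod_eq_of_lt j.isLt, Nat.mod_eq_of_lt l.isLt, Fin.val_inj]

/-- The exponential of real frequency `u` in a theta series: `thetaChar a b z τ` is the sum of
`thetaMode u (z + b) τ` over `u ∈ ℤ + a`. -/
noncomputable def thetaMode (u : ℝ) (z τ : ℂ) : ℂ :=
  cexp (Real.pi * I * u ^ 2 * τ + 2 * Real.pi * I * u * z)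

/-- The weight `h_0^k` of the torus of modulus `τ / k` at the point `z = x + y * (τ / k)`. It does
not depend on `x`, and depends on `k` and the modulus only through their product, here `τ`. -/
noncomputable def thetaWeight (φ τ : ℂ) (y : ℝ) : ℂ :=
  cexp (Real.pi * I * (τ - conj τ) * y ^ 2 + 2 * Real.pi * I * (φ - conj φ) * y)

section Theta

variable {τ : ℂ}

lemma thetaChar_eq_tsum_thetaMode (a b : ℝ) (z τ : ℂ) :
    thetaChar a b z τ = ∑' n : ℤ, thetaMode (n + a) (z + b) τ := by
  simp only [thetaChar, thetaMode, ofReal_add, ofReal_intCast]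

lemma thetaMode_int_add (n : ℤ) (a : ℝ) (z τ : ℂ) :
    thetaMode (n + a) z τ = thetaMode a z τ * jacobiTheta₂_term n (z + a * τ) τ := by
  rw [thetaMode, thetaMode, jacobiTheta₂_term, ← Complex.exp_add]
  push_cast
  ring_nf

lemma summable_norm_thetaMode (a : ℝ) (z : ℂ) (hτ : 0 < τ.im) :
    Summable fun n : ℤ ↦ ‖thetaMode (n + a) z τ‖ := by
  simp only [thetaMode_int_add]
  exact (((summable_jacobiTheta₂_term_iff _ τ).mpr hτ).mul_left _).norm

lemma thetaChar_eq_mul_jacobiTheta₂ (a b : ℝ) (z τ : ℂ) :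
    thetaChar a b z τ = thetaMode a (z + b) τ * jacobiTheta₂ (z + b + a * τ) τ := by
  simp only [thetaChar_eq_tsum_thetaMode, thetaMode_int_add, tsum_mul_left, jacobiTheta₂]

lemma continuous_thetaChar (a b : ℝ) (hτ : 0 < τ.im) : Continuous fun z ↦ thetaChar a b z τ := by
  have : Continuous fun z ↦ jacobiTheta₂ z τ :=
    continuous_iff_continuousAt.mpr fun z ↦ (differentiableAt_jacobiTheta₂_fst z hτ).continuousAt
  simp only [thetaChar_eq_mul_jacobiTheta₂, thetaMode]
  fun_prop

lemma thetaChar_add_int (a b : ℝ) (m : ℤ) (z τ : ℂ) :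
    thetaChar (a + m) b z τ = thetaChar a b z τ := by
  simp only [thetaChar_eq_tsum_thetaMode]
  rw [← (Equiv.addRight m).tsum_eq fun n : ℤ ↦ thetaMode (n + a) (z + b) τ]
  simp only [Equiv.coe_addRight, Int.cast_add, add_assoc, add_comm (m : ℝ)]

lemma thetaChar_div_eq_of_modEq {k : ℕ} (hk : k ≠ 0) {p q : ℤ} (hpq : p ≡ q [ZMOD k]) (b : ℝ)
    (z τ : ℂ) : thetaChar (p / k) b z τ = thetaChar (q / k) b z τ := by
  obtain ⟨m, hm⟩ := hpq.dvd
  have : (q / k : ℝ) = p / k + m := by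
    rw [eq_add_of_sub_eq' hm]
    push_cast
    field_simp
  rw [this, thetaChar_add_int]

lemma thetaMode_mul_add_eq_mul_fourier {k : ℕ} (hk : k ≠ 0) (n p : ℤ) (x : ℝ) (w τ : ℂ) :
    thetaMode (n + p / k) (k * x + w) τ =
      thetaMode (n + p / k) w τ * fourier (k * n + p) (x : UnitAddCircle) := by
  have hk' : (k : ℂ) ≠ 0 := Nat.cast_ne_zero.mpr hk
  rw [thetaMode, thetaMode, fourier_coe_apply, ← Complex.exp_add]
  push_cast
  congr 1
  field_simp
  ring

lemma thetaChar_div_eq_tsum_fourier {k : ℕ} (hk : k ≠ 0) (p : ℤ) (b x : ℝ) (w τ : ℂ) :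
    thetaChar (p / k) b (k * x + w) τ =
      ∑' n : ℤ, thetaMode (n + p / k) (w + b) τ * fourier (k * n + p) (x : UnitAddCircle) := by
  simp only [thetaChar_eq_tsum_thetaMode, add_assoc, thetaMode_mul_add_eq_mul_fourier hk]

lemma intervalIntegral_conj_thetaChar_mul_thetaChar {k : ℕ} (hk : k ≠ 0) (p q : ℤ) (b : ℝ) (w : ℂ)
    (hτ : 0 < τ.im) :
    ∫ x in (0 : ℝ)..1,
        conj (thetaChar (p / k) b (k * x + w) τ) * thetaChar (q / k) b (k * x + w) τ =
      if p ≡ q [ZMOD k] then ∑' n : ℤ, (‖thetaMode (n + p / k) (w + b) τ‖ : ℂ) ^ 2 else 0 := by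
  have summable_coeff (r : ℤ) := summable_norm_thetaMode (r / k) (w + b) hτ
  split_ifs with hpq
  · have frequency_injective : Function.Injective fun n : ℤ ↦ (k * n + p : ℤ) :=
      (add_left_injective p).comp (mul_right_injective₀ (by exact_mod_cast hk))
    simp only [← thetaChar_div_eq_of_modEq hk hpq, thetaChar_div_eq_tsum_fourier hk]
    rw [← integral_conj_tsum_fourier_mul_self (T := 1) (summable_coeff p) frequency_injective,
      ← intervalIntegral_eq_integral_haarAddCircle]
  · have frequency_ne (m n : ℤ) : (k * m + p : ℤ) ≠ k * n + q := fun h ↦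
      hpq (by simpa [Int.ModEq] using congrArg (· % (k : ℤ)) h)
    simp only [thetaChar_div_eq_tsum_fourier hk]
    rw [← integral_conj_tsum_fourier_mul_tsum_fourier_of_forall_ne (T := 1) (summable_coeff p)
      (summable_coeff q) frequency_ne, ← intervalIntegral_eq_integral_haarAddCircle]

lemma cexp_torus_weight_eq_thetaWeight (k : ℕ) (hτ : τ.im ≠ 0) (φ : ℂ) (x y : ℝ) :
    cexp (Real.pi * I * k * (((x : ℂ) + y * τ) - ((x : ℂ) + y * conj τ)) ^ 2 / (τ - conj τ) +
        2 * Real.pi * I * (((x : ℂ) + y * τ) - ((x : ℂ) + y * conj τ)) * (φ - conj φ)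
          / (τ - conj τ)) =
      thetaWeight φ (k * τ) y := by
  have hsub := sub_conj_ne_zero hτ
  rw [thetaWeight, map_mul, conj_natCast]
  congr 1
  field_simp
  ring

lemma norm_thetaMode_sq_mul_thetaWeight (u y : ℝ) (φ τ : ℂ) :
    (‖thetaMode u (y * τ + φ) τ‖ : ℂ) ^ 2 * thetaWeight φ τ y = thetaWeight φ τ (y + u) := by
  rw [← conj_mul', thetaMode, thetaWeight, thetaWeight, ← Complex.exp_conj, ← Complex.exp_add,
    ← Complex.exp_add]
  simp only [map_add, map_mul, map_pow, conj_I, conj_ofReal, conj_ofNat, ofReal_add]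
  ring_nf

lemma re_pi_mul_I_mul_sub_conj_neg (hτ : 0 < τ.im) : (Real.pi * I * (τ - conj τ)).re < 0 := by
  have : 0 < Real.pi * (2 * τ.im) := by positivity
  simpa [sub_conj] using this

lemma integrable_thetaWeight (φ : ℂ) (hτ : 0 < τ.im) : Integrable (thetaWeight φ τ) := by
  simpa only [add_zero] using!
    integrable_cexp_quadratic' (re_pi_mul_I_mul_sub_conj_neg hτ) (2 * Real.pi * I * (φ - conj φ)) 0

lemma integral_thetaWeight (φ : ℂ) (hτ : 0 < τ.im) :
    ∫ u, thetaWeight φ τ u =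
      (I / (τ - conj τ)) ^ (1 / 2 : ℂ) *
        cexp (-(Real.pi * I) * (φ - conj φ) ^ 2 / (τ - conj τ)) := by
  have hre := re_pi_mul_I_mul_sub_conj_neg hτ
  have hπ : (Real.pi : ℂ) ≠ 0 := by exact_mod_cast Real.pi_ne_zero
  have hsub := sub_conj_ne_zero hτ.ne'
  have base_eq : Real.pi / -(Real.pi * I * (τ - conj τ)) = I / (τ - conj τ) := by
    field_simp
    rw [I_sq]
  have exponent_eq : 0 - (2 * Real.pi * I * (φ - conj φ)) ^ 2 / (4 * (Real.pi * I * (τ - conj τ))) =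
      -(Real.pi * I) * (φ - conj φ) ^ 2 / (τ - conj τ) := by
    field_simp
    ring
  rw [← base_eq, ← exponent_eq, ← integral_cexp_quadratic hre]
  simp only [thetaWeight, add_zero]

lemma intervalIntegral_tsum_norm_thetaMode_sq_mul_thetaWeight (a : ℝ) (φ : ℂ) (hτ : 0 < τ.im) :
    ∫ y in (0 : ℝ)..1,
        (∑' n : ℤ, (‖thetaMode (n + a) (y * τ + φ) τ‖ : ℂ) ^ 2) * thetaWeight φ τ y =
      ∫ u, thetaWeight φ τ u := by
  simp only [← tsum_mul_right, norm_thetaMode_sq_mul_thetaWeight, ← add_assoc]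
  rw [intervalIntegral_tsum_comp_add_int ((integrable_thetaWeight φ hτ).comp_add_right a),
    integral_add_right_eq_self]

end Theta

theorem torus_gram_diagonal_general (k : ℕ) (hk : 0 < k) (τ φ : ℂ) (hτ : 0 < τ.im) (p q : ℤ) :
    (∫ x in (0 : ℝ)..1, ∫ y in (0 : ℝ)..1,
      conj (thetaChar (p / k) 0 (k * ((x : ℂ) + y * τ) + φ) (k * τ)) *
        thetaChar (q / k) 0 (k * ((x : ℂ) + y * τ) + φ) (k * τ) *
        cexp (Real.pi * I * k * (((x : ℂ) + y * τ) - ((x : ℂ) + y * conj τ)) ^ 2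
            / (τ - conj τ) +
          2 * Real.pi * I * (((x : ℂ) + y * τ) - ((x : ℂ) + y * conj τ)) * (φ - conj φ)
            / (τ - conj τ))) =
      (I / (k * (τ - conj τ))) ^ (1 / 2 : ℂ) *
        cexp (-(Real.pi * I / k) * (φ - conj φ) ^ 2 / (τ - conj τ)) *
        (if p ≡ q [ZMOD k] then 1 else 0) := by
  have hkτ : 0 < ((k : ℂ) * τ).im := by
    rw [← ofReal_natCast, im_ofReal_mul]
    positivity
  have section_arg (x y : ℝ) : (k * (x + y * τ) + φ : ℂ) = k * x + (y * (k * τ) + φ) := by ring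
  have continuous_section (a : ℝ) := continuous_thetaChar a 0 hkτ
  simp only [cexp_torus_weight_eq_thetaWeight k hτ.ne']
  rw [intervalIntegral_swap_of_continuous]
  · simp only [section_arg, intervalIntegral.integral_mul_const,
      intervalIntegral_conj_thetaChar_mul_thetaChar hk.ne' p q 0 _ hkτ, ofReal_zero, add_zero]
    split_ifs
    · rw [intervalIntegral_tsum_norm_thetaMode_sq_mul_thetaWeight _ φ hkτ,
        integral_thetaWeight φ hkτ, map_mul, conj_natCast, ← mul_sub, mul_one]
      congr 2
      field_simp
    · simp only [zero_mul, mul_zero, intervalIntegral.integral_zero]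
  · simp only [thetaWeight, Function.uncurry_def]
    fun_prop

/-- On the flat torus of modulus `τ` (area `2π`), the sections
`s_j(z) = θ_{j/k,0}(kz + φ, kτ)`, `j = 1,…,k`, are orthogonal with respect to the
weight `h_0^k(z) = exp(πik(z-z̄)²/(τ-τ̄) + 2πi(z-z̄)(φ-φ̄)/(τ-τ̄))`:
`⟨s_j, s_l⟩ = √(i/(k(τ-τ̄))) · exp(-(πi/k)(φ-φ̄)²/(τ-τ̄)) · δ_{jl}`.
The integral over the fundamental domain `z = x + yτ`, `(x,y) ∈ [0,1]²`, with
the flat metric of total area `2π`, normalizes so that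
`⟨s_j,s_l⟩ = ∫_{[0,1]²} conj(s_j(z)) s_l(z) h_0^k(z) dx dy`. -/
theorem torus_gram_diagonal (k : ℕ) (hk : 0 < k) (τ φ : ℂ) (hτ : 0 < τ.im)
    (j l : Fin k) :
    (∫ x in (0:ℝ)..1, ∫ y in (0:ℝ)..1,
      conj (thetaChar (((j : ℕ) + 1 : ℝ) / k) 0 (k * ((x : ℂ) + y * τ) + φ) (k * τ)) *
        thetaChar (((l : ℕ) + 1 : ℝ) / k) 0 (k * ((x : ℂ) + y * τ) + φ) (k * τ) *
        Complex.exp (Real.pi * I * k * (((x : ℂ) + y * τ) - ((x : ℂ) + y * conj τ)) ^ 2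
            / (τ - conj τ) +
          2 * Real.pi * I * (((x : ℂ) + y * τ) - ((x : ℂ) + y * conj τ)) * (φ - conj φ)
            / (τ - conj τ)))
    = (I / (k * (τ - conj τ))) ^ ((1 : ℂ) / 2) *
        Complex.exp (-(Real.pi * I / k) * (φ - conj φ) ^ 2 / (τ - conj τ)) *
        (if j = l then 1 else 0) := by
  simpa only [Int.cast_add, Int.cast_natCast, Int.cast_one, fin_add_one_modEq_add_one_iff] using
    torus_gram_diagonal_general k hk τ φ hτ (j + 1) (l + 1)
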